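/- For t > 0, define the seven matrices in so(7): Λ_t(X₁) = G₂₇ − (1−1/(4t))(G₃₅+G₄₆), Λ_t(X₂) = −G₁₇ − (1−1/(4t))(G₄₅−G₃₆), Λ_t(X₃) = (1/(4t))G₄₇ − (1/(4t))(G₂₆−G₁₅), Λ_t(X₄) = −(1/(4t))G₃₇ + (1/(4t))(G₁₆+G₂₅), Λ_t(X₅) = −(1/(4t))G₆₇ − (1/(4t))(G₁₃+G₂₄), Λ_t(X₆) = (1/(4t))G₅₇ − (1/(4t))(G₁₄−G₂₃), Λ_t(X₇) = G₁₂ + (1−1/(4t))(G₃₄−G₅₆). Then all seven matrices Λ_t(Xᵢ) lie in the subspace m = span{G₁₆−G₃₇+G₂₅, G₁₅−G₂₆+G₄₇, G₁₇+G₃₆−G₄₅, G₂₇+G₃₅+G₄₆, G₁₂−G₃₄+G₅₆, G₁₃+G₂₄+G₆₇, G₁₄−G₂₃−G₅₇} if and only if t = 1/8. (This is the condition under which the minimal G₂-connection of the homogeneous G₂-structure on the Aloff–Wallach space N(1,1) = SU(3)/S¹ is the canonical connection.) -/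

import Mathlib

/- STATEMENT 19: For t > 0, the seven matrices Λ_t(Xᵢ) ∈ so(7) representing the
Levi-Civita connection of the Aloff–Wallach space N(1,1) = SU(3)/S¹ all lie in
the subspace m = g₂^⊥ if and only if t = 1/8.
(All indices are 0-based: G a b = G_{a+1,b+1}.) -/

open Matrix

noncomputable section

namespace Stmt19

/-- The basis `G_{ab}` of `so(7)`. -/
def G (a b : Fin 7) : Matrix (Fin 7) (Fin 7) ℝ :=
  Matrix.of fun k l => if k = a ∧ l = b then (-1 : ℝ) else if k = b ∧ l = a then 1 else 0

/-- `m = g₂^⊥`, given by its seven spanning matrices. -/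
def m : Submodule ℝ (Matrix (Fin 7) (Fin 7) ℝ) :=
  Submodule.span ℝ {G 0 5 - G 2 6 + G 1 4, G 0 4 - G 1 5 + G 3 6, G 0 6 + G 2 5 - G 3 4,
    G 1 6 + G 2 4 + G 3 5, G 0 1 - G 2 3 + G 4 5, G 0 2 + G 1 3 + G 5 6,
    G 0 3 - G 1 2 - G 4 6}

/-- The Levi-Civita connection of the metric `g_t` on the Aloff–Wallach space
`N(1,1) = SU(3)/S¹` in the orthonormal basis `X₁, …, X₇` (0-based). -/
def Λ (t : ℝ) : Fin 7 → Matrix (Fin 7) (Fin 7) ℝ :=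
  ![G 1 6 - (1 - 1 / (4 * t)) • (G 2 4 + G 3 5),
    -G 0 6 - (1 - 1 / (4 * t)) • (G 3 4 - G 2 5),
    (1 / (4 * t)) • G 3 6 - (1 / (4 * t)) • (G 1 5 - G 0 4),
    -((1 / (4 * t)) • G 2 6) + (1 / (4 * t)) • (G 0 5 + G 1 4),
    -((1 / (4 * t)) • G 5 6) - (1 / (4 * t)) • (G 0 2 + G 1 3),
    (1 / (4 * t)) • G 4 6 - (1 / (4 * t)) • (G 0 3 - G 1 2),
    G 0 1 + (1 - 1 / (4 * t)) • (G 2 3 - G 4 5)]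

/-! Write `c = 1 / (4 * t)`. Modulo `m`, each `Λ t i` is `2 - c` times a matrix independent of `t`:
the cross product with `Xᵢ₊₁` on `span {X₁, X₂, X₇}`. Already `G 1 6`, its value at `X₁`, is not
in `m`, so `Λ t` takes values in `m` exactly when `c = 2`. -/

/-- The spanning matrices of `m`, indexed so that for `t = 1 / 8` each `Λ t i` is a multiple of
`mGenerator i`. -/
def mGenerator : Fin 7 → Matrix (Fin 7) (Fin 7) ℝ :=
  ![G 1 6 + G 2 4 + G 3 5, G 0 6 + G 2 5 - G 3 4, G 0 4 - G 1 5 + G 3 6, G 0 5 - G 2 6 + G 1 4,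
    G 0 2 + G 1 3 + G 5 6, G 0 3 - G 1 2 - G 4 6, G 0 1 - G 2 3 + G 4 5]

/-- The cross product of the oriented three-space spanned by `X₁, X₂, X₇`, extended by zero: the
matrix at index `i` is that of `Xᵢ₊₁ × ·`. It measures the failure of `Λ t` to take values
in `m`. -/
def crossProduct₁₂₇ : Fin 7 → Matrix (Fin 7) (Fin 7) ℝ :=
  ![G 1 6, -G 0 6, 0, 0, 0, 0, G 0 1]

lemma mGenerator_mem_m (i : Fin 7) : mGenerator i ∈ m := by
  fin_cases i <;> exact Submodule.subset_span (by simp [mGenerator])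

-- On skew matrices the functional is, up to scale, the Frobenius pairing with the element
-- `G 1 6 - G 2 4` of `g₂`.
lemma m_le_ker_entry_one_six_sub_entry_two_four :
    m ≤ LinearMap.ker (Matrix.entryLinearMap ℝ ℝ (1 : Fin 7) (6 : Fin 7) -
      Matrix.entryLinearMap ℝ ℝ 2 4) := by
  refine Submodule.span_le.2 fun X hX ↦ ?_
  rcases hX with rfl | rfl | rfl | rfl | rfl | rfl | rfl <;> simp [G]

lemma G_one_six_notMem_m : G 1 6 ∉ m := fun h ↦ by
  simpa [G] using m_le_ker_entry_one_six_sub_entry_two_four h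

lemma Λ_eq_smul_mGenerator_add_smul_crossProduct₁₂₇ (t : ℝ) (i : Fin 7) :
    Λ t i = (![1, -1, 1, 1, -1, -1, 1] i * (1 / (4 * t)) + ![-1, 1, 0, 0, 0, 0, -1] i) •
      mGenerator i + (2 - 1 / (4 * t)) • crossProduct₁₂₇ i := by
  fin_cases i <;>
    simp only [Λ, mGenerator, crossProduct₁₂₇, Fin.reduceFinMk, Fin.zero_eta, Fin.mk_one,
      Matrix.cons_val] <;>
    module

lemma Λ_mem_m_iff (t : ℝ) (i : Fin 7) :
    Λ t i ∈ m ↔ (2 - 1 / (4 * t)) • crossProduct₁₂₇ i ∈ m := by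
  rw [Λ_eq_smul_mGenerator_add_smul_crossProduct₁₂₇]
  exact m.add_mem_iff_right (m.smul_mem _ (mGenerator_mem_m i))

lemma forall_Λ_mem_m_iff (t : ℝ) : (∀ i, Λ t i ∈ m) ↔ 1 / (4 * t) = 2 := by
  simp only [Λ_mem_m_iff]
  refine ⟨fun h ↦ ?_, fun h i ↦ by simp [h]⟩
  by_contra hne
  exact G_one_six_notMem_m ((m.smul_mem_iff (sub_ne_zero.2 (Ne.symm hne))).1 (h 0))

theorem AloffWallach_canonical_iff (t : ℝ) (ht : 0 < t) :
    (∀ i : Fin 7, Λ t i ∈ m) ↔ t = 1 / 8 := by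
  rw [forall_Λ_mem_m_iff, div_eq_iff (by positivity)]
  constructor <;> intro h <;> linarith

end Stmt19
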